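/- arXiv:1504.00054 — 2 statements merged into one kernel-verified Lean document; each statement's English description precedes it below -/
import Mathlib

section
/- Let A be a densely defined closed operator in a complex Hilbert space H and C an antilinear, isometric, involutive operator on H that commutes with A, i.e. C Dom(A) ⊆ Dom(A) and ACψ = CAψ for all ψ ∈ Dom(A). Let μ₀ ∈ ℝ be a simple eigenvalue of A such that ker(A − μ₀) is one-dimensional spanned by ψ₀ with Cψ₀ = ψ₀, and such that ker(A* − μ₀) is one-dimensional spanned by ψ₀* with the normalization ⟨ψ₀, ψ₀*⟩ = 1. Then Cψ₀* = ψ₀*, and consequently the spectral projection P₀ := ⟨·, ψ₀*⟩ψ₀ of A corresponding to μ₀ commutes with C: P₀ C = C P₀ on H. -/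
/-!
The antilinear isometric involution `C` satisfies `⟪C φ, ψ⟫ = ⟪C ψ, φ⟫`. Since `C` commutes with
`A` and `μ₀` is real, moving `C` across the inner product shows that `C ψs` again lies in
`ker (A* - μ₀)`; that kernel is one-dimensional, so `C ψs = c • ψs`. Pairing with `ψ₀ = C ψ₀` and
using the normalization forces `c = 1`. The commutation of the projection with `C` is then
the identity `⟪ψs, C x⟫ = ⟪C ψs, C x⟫ = ⟪x, ψs⟫`.
-/

open scoped ComplexInnerProductSpace

/-- Let `A` commute with an antilinear, isometric, involutive `C`, let
`μ₀ ∈ ℝ` be a simple eigenvalue with `ker (A - μ₀)` spanned by the `C`-symmetric `ψ₀`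
and `ker (A* - μ₀)` spanned by `ψ₀*` with `⟨ψ₀, ψ₀*⟩ = 1`.  Then `Cψ₀* = ψ₀*` and the
spectral projection `P₀ = ⟨·, ψ₀*⟩ψ₀` commutes with `C`.
(The paper's inner product `⟨φ, ψ⟩`, linear in the first slot, is Mathlib's `⟪ψ, φ⟫`.) -/
theorem adjoint_eigenvector_symmetric_and_projection_commutes
    {H : Type*} [NormedAddCommGroup H] [InnerProductSpace ℂ H] [CompleteSpace H]
    (dom : Set H) (hdense : Dense dom)
    (A : H → H)
    (hA_add : ∀ x ∈ dom, ∀ y ∈ dom, x + y ∈ dom ∧ A (x + y) = A x + A y)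
    (hA_smul : ∀ (c : ℂ), ∀ x ∈ dom, c • x ∈ dom ∧ A (c • x) = c • A x)
    (hA_closed : IsClosed {p : H × H | p.1 ∈ dom ∧ p.2 = A p.1})
    (C : H → H)
    (hC_antilinear : ∀ (lam : ℂ) (φ ψ : H), C (lam • φ + ψ) = (starRingEnd ℂ) lam • C φ + C ψ)
    (hC_inner : ∀ φ ψ : H, ⟪C φ, C ψ⟫ = ⟪ψ, φ⟫)
    (hC_invol : ∀ ψ : H, C (C ψ) = ψ)
    (hC_dom : ∀ ψ ∈ dom, C ψ ∈ dom)
    (hAC : ∀ ψ ∈ dom, A (C ψ) = C (A ψ))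
    -- the adjoint `A*` of `A`
    (Astar : H → H) (domStar : Set H)
    (hadj_mem : ∀ y : H, y ∈ domStar ↔ ∃ w : H, ∀ x ∈ dom, ⟪y, A x⟫ = ⟪w, x⟫)
    (hadj_val : ∀ y ∈ domStar, ∀ x ∈ dom, ⟪y, A x⟫ = ⟪Astar y, x⟫)
    -- the real simple eigenvalue and the eigenvectors
    (μ₀ : ℝ) (ψ₀ : H) (hψ₀dom : ψ₀ ∈ dom) (hψ₀ne : ψ₀ ≠ 0)
    (hψ₀ev : A ψ₀ = (μ₀ : ℂ) • ψ₀)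
    (hker : ∀ φ ∈ dom, A φ = (μ₀ : ℂ) • φ → ∃ c : ℂ, φ = c • ψ₀)
    (hψ₀C : C ψ₀ = ψ₀)
    (ψs : H) (hψsdom : ψs ∈ domStar) (hψsne : ψs ≠ 0)
    (hψsev : Astar ψs = (μ₀ : ℂ) • ψs)
    (hkerstar : ∀ φ ∈ domStar, Astar φ = (μ₀ : ℂ) • φ → ∃ c : ℂ, φ = c • ψs)
    (hnorm : ⟪ψs, ψ₀⟫ = 1) :
    C ψs = ψs ∧ ∀ x : H, ⟪ψs, C x⟫ • ψ₀ = C (⟪ψs, x⟫ • ψ₀) := by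
  -- `C` moves across the inner product at the price of swapping the arguments.
  have hswap : ∀ φ ψ : H, ⟪C φ, ψ⟫ = ⟪C ψ, φ⟫ := fun φ ψ => by
    have h := hC_inner φ (C ψ)
    rwa [hC_invol] at h
  have hpair : ∀ x ∈ dom, ⟪C ψs, A x⟫ = ⟪(μ₀ : ℂ) • C ψs, x⟫ := fun x hx => by
    have h := hadj_val ψs hψsdom (C x) (hC_dom x hx)
    rw [hAC x hx, hψsev] at h
    calc ⟪C ψs, A x⟫ = ⟪C (A x), ψs⟫ := hswap _ _
      _ = (starRingEnd ℂ) ⟪ψs, C (A x)⟫ := (inner_conj_symm _ _).symm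
      _ = ⟪C x, (μ₀ : ℂ) • ψs⟫ := by rw [h, inner_conj_symm]
      _ = ⟪(μ₀ : ℂ) • C ψs, x⟫ := by
        rw [inner_smul_right, inner_smul_left, Complex.conj_ofReal, hswap]
  have hmem : C ψs ∈ domStar := (hadj_mem _).2 ⟨_, hpair⟩
  -- The value of the adjoint is determined because `dom` is dense.
  have hev : Astar (C ψs) = (μ₀ : ℂ) • C ψs :=
    hdense.eq_of_inner_left ℂ fun x hx => by
      rw [← hadj_val _ hmem x hx, hpair x hx]
  obtain ⟨c, hc⟩ := hkerstar _ hmem hev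
  have hCψs : C ψs = ψs := by
    have h := hC_inner ψs ψ₀
    rw [hψ₀C, hc, inner_smul_left, hnorm, ← inner_conj_symm, hnorm, map_one, mul_one] at h
    have hc1 : c = 1 := by simpa using congrArg (starRingEnd ℂ) h
    rw [hc, hc1, one_smul]
  refine ⟨hCψs, fun x => ?_⟩
  have hC0 : C 0 = 0 := by simpa using hC_antilinear 1 0 0
  have hCsmul := hC_antilinear ⟪ψs, x⟫ ψ₀ 0
  rw [add_zero, hC0, add_zero, hψ₀C, inner_conj_symm] at hCsmul
  have h := hC_inner ψs x
  rw [hCψs] at h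
  rw [hCsmul, h]
end

section
/- Let A and f satisfy Assumption (I) and Assumption (II) with antilinear symmetry C, let μ₀ ∈ ℝ, let Cψ₀ = ψ₀, and suppose the spectral projection P₀ = ⟨·, ψ₀*⟩ψ₀ commutes with C. Then the coefficient ν := −⟨f(ψ₀), ψ₀*⟩ is real, and the unique solution φ ∈ Q₀Dom(A) (i.e. P₀φ = 0, φ ∈ Dom(A)) of (A − μ₀)φ = νψ₀ + f(ψ₀) satisfies Cφ = φ. -/
/-!
Since `C ψ₀ = ψ₀` and `P₀` commutes with `C`, the functional `⟪ψs, ·⟫` intertwines `C` with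
complex conjugation. As `C` fixes `f ψ₀`, the number `ν = -⟪ψs, f ψ₀⟫` is its own conjugate.
With `μ₀` and `ν` real, applying `C` to `(A - μ₀) φ = ν ψ₀ + f ψ₀` shows that `C φ` solves the
same equation and has `P₀ (C φ) = 0`, so `C φ = φ` by uniqueness.
-/

open scoped ComplexInnerProductSpace

/-- `iterDom A dom k` is the domain of the `k`-th power of the operator `A` with
domain `dom`; `iterDom A dom 0 = H`. -/
def iterDom {H : Type*} (A : H → H) (dom : Set H) : ℕ → Set H
  | 0 => Set.univ
  | (k + 1) => {x | x ∈ dom ∧ A x ∈ iterDom A dom k}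

/-- under Assumptions (I) and (II) (antilinear symmetry `C`), with `μ₀ ∈ ℝ`,
`Cψ₀ = ψ₀` and `P₀ C = C P₀`, the coefficient `ν = -⟨f(ψ₀), ψ₀*⟩` is real and the unique
solution `φ ∈ Q₀Dom(A)` of `(A - μ₀)φ = νψ₀ + f(ψ₀)` satisfies `Cφ = φ`.
(The paper's inner product `⟨φ, ψ⟩`, linear in the first slot, is Mathlib's `⟪ψ, φ⟫`.) -/
theorem first_order_coefficients_real_and_symmetric
    {H : Type*} [NormedAddCommGroup H] [InnerProductSpace ℂ H] [CompleteSpace H]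
    -- (I): A densely defined closed operator with nonempty resolvent set
    (dom : Submodule ℂ H) (hdense : Dense (dom : Set H))
    (A : H → H)
    (hA_add : ∀ x ∈ dom, ∀ y ∈ dom, A (x + y) = A x + A y)
    (hA_smul : ∀ (c : ℂ), ∀ x ∈ dom, A (c • x) = c • A x)
    (hA_closed : IsClosed {p : H × H | p.1 ∈ dom ∧ p.2 = A p.1})
    -- (I)(a): the space X (as a subset of H), with Dom(Aⁿ) ⊆ X ⊆ Dom(A^{n-1})
    (n : ℕ) (hn : 1 ≤ n) (Xs : Set H)
    (hXsub : Xs ⊆ iterDom A dom (n - 1))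
    (hdomX : iterDom A dom n ⊆ Xs)
    -- (I)(b): the isolated simple *real* eigenvalue μ₀ with normalized eigenvectors
    (μ₀ : ℝ) (ψ₀ ψs : H)
    (hψ₀dom : ψ₀ ∈ dom) (hψ₀X : ψ₀ ∈ Xs)
    (hψ₀ev : A ψ₀ = (μ₀ : ℂ) • ψ₀) (hψ₀norm : ‖ψ₀‖ = 1)
    (hψsev : ∀ x ∈ dom, ⟪ψs, A x⟫ = (μ₀ : ℂ) * ⟪ψs, x⟫)
    (hnorm : ⟪ψs, ψ₀⟫ = 1)
    (hsimple : ∀ φ ∈ dom, A φ = (μ₀ : ℂ) • φ → ∃ c : ℂ, φ = c • ψ₀)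
    -- (I)(c): the nonlinearity f : X → Dom(A^{n-1})
    (f : H → H) (hf_maps : ∀ x ∈ Xs, f x ∈ iterDom A dom (n - 1))
    -- (II): the antilinear symmetry C of A and f
    (C : H → H)
    (hC_antilinear : ∀ (lam : ℂ) (φ ψ : H), C (lam • φ + ψ) = (starRingEnd ℂ) lam • C φ + C ψ)
    (hC_inner : ∀ φ ψ : H, ⟪C φ, C ψ⟫ = ⟪ψ, φ⟫)
    (hC_invol : ∀ ψ : H, C (C ψ) = ψ)
    (hC_dom : ∀ ψ ∈ dom, C ψ ∈ dom)
    (hAC : ∀ ψ ∈ dom, A (C ψ) = C (A ψ))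
    (hCf : ∀ ψ ∈ Xs, C (f ψ) = f (C ψ))
    -- the eigenvector is C-symmetric and P₀ = ⟨·, ψ₀*⟩ψ₀ commutes with C
    (hψ₀C : C ψ₀ = ψ₀)
    (hP₀C : ∀ x : H, ⟪ψs, C x⟫ • ψ₀ = C (⟪ψs, x⟫ • ψ₀))
    -- the equation (A - μ₀)φ = νψ₀ + f(ψ₀) has a unique solution with P₀φ = 0
    (huniq : ∃! φ : H, φ ∈ dom ∧ ⟪ψs, φ⟫ • ψ₀ = (0 : H) ∧
      A φ - (μ₀ : ℂ) • φ = (-⟪ψs, f ψ₀⟫) • ψ₀ + f ψ₀) :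
    (-⟪ψs, f ψ₀⟫ : ℂ).im = 0 ∧
    ∀ φ ∈ dom, ⟪ψs, φ⟫ • ψ₀ = (0 : H) →
      A φ - (μ₀ : ℂ) • φ = (-⟪ψs, f ψ₀⟫) • ψ₀ + f ψ₀ → C φ = φ := by
  have hC0 : C 0 = 0 := by simpa using hC_antilinear 1 0 0
  have hC_add : ∀ x y, C (x + y) = C x + C y := fun x y => by
    simpa using hC_antilinear 1 x y
  have hC_smul : ∀ (c : ℂ) x, C (c • x) = (starRingEnd ℂ) c • C x := fun c x => by
    simpa [hC0] using hC_antilinear c x 0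
  have hψ₀ne : ψ₀ ≠ 0 := by
    intro h
    simp [h] at hψ₀norm
  -- Comparing coefficients of `ψ₀` in `P₀ C x = C P₀ x`.
  have hconj : ∀ x, ⟪ψs, C x⟫ = (starRingEnd ℂ) ⟪ψs, x⟫ := fun x => by
    have h := hP₀C x
    rw [hC_smul, hψ₀C] at h
    exact smul_left_injective ℂ hψ₀ne h
  have hCfψ₀ : C (f ψ₀) = f ψ₀ := by rw [hCf ψ₀ hψ₀X, hψ₀C]
  have hreal : (starRingEnd ℂ) ⟪ψs, f ψ₀⟫ = ⟪ψs, f ψ₀⟫ := by rw [← hconj, hCfψ₀]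
  refine ⟨by simpa using Complex.conj_eq_iff_im.mp hreal, fun φ hφ hPφ hφeq => ?_⟩
  refine huniq.unique ⟨hC_dom φ hφ, ?_, ?_⟩ ⟨hφ, hPφ, hφeq⟩
  · rw [hP₀C, hPφ, hC0]
  · calc A (C φ) - (μ₀ : ℂ) • C φ = C (A φ - (μ₀ : ℂ) • φ) := by
          rw [hAC φ hφ, sub_eq_add_neg (A φ), ← neg_smul, hC_add, hC_smul, map_neg,
            Complex.conj_ofReal, neg_smul, ← sub_eq_add_neg]
      _ = (-⟪ψs, f ψ₀⟫) • ψ₀ + f ψ₀ := by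
          rw [hφeq, hC_add, hC_smul, map_neg, hreal, hψ₀C, hCfψ₀]
end
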